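/- For every integer a, the Gauss period η'_a = ∑_{x ∈ C_a^{(M,G)}} ψ'(x) satisfies η'_a = −2^s·ψ(ω^a D) − 1; consequently η'_a = 2^s − 1 if a mod M ∈ T_1, η'_a = −2^{2s} + 2^s − 1 if a mod M ∈ T_2, and η'_a = 2^{2s} + 2^s − 1 if a mod M ∈ T_3. -/

import Mathlib

noncomputable section

open scoped BigOperators

/-- `M = 2^{2s} + 2^s + 1`. -/
abbrev Mof (s : ℕ) : ℕ := 2 ^ (2 * s) + 2 ^ s + 1

/-- The relative trace from `F` (of order `2^{3s}`) to its subfield `E` of order `2^s`: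
`Tr_{F/E}(x) = x + x^{2^s} + x^{2^{2s}}`, viewed as a map `F → F`. -/
def trFE {F : Type*} [Field F] (s : ℕ) (x : F) : F :=
  x + x ^ (2 ^ s) + x ^ (2 ^ (2 * s))

/-- `ψ(x) = 1` if the absolute trace `Tr_{F/𝔽₂}(x) = 0`, and `-1` otherwise. -/
def psi (F : Type*) [Field F] [Algebra (ZMod 2) F] (x : F) : ℤ :=
  if Algebra.trace (ZMod 2) F x = 0 then 1 else -1

/-- `ψ(cS) = ∑_{x ∈ S} ψ(c·x)`. -/
def psiSum (F : Type*) [Field F] [Algebra (ZMod 2) F] (c : F) (S : Set F) : ℤ :=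
  ∑ᶠ x ∈ S, psi F (c * x)

/-- `D = {u ∈ F^× : Tr_{F/E}(u⁻¹) = 0}`. -/
def Dset (F : Type*) [Field F] (s : ℕ) : Set F :=
  {u | u ≠ 0 ∧ trFE s u⁻¹ = 0}

/-- `S_a = {u ∈ F^× : Tr_{F/E}(u^{2^s+1}) = 0 ∧ Tr_{F/E}(ω^a u) = 0}`. -/
def Sa {F : Type*} [Field F] (s : ℕ) (ω : F) (a : ℤ) : Set F :=
  {u | u ≠ 0 ∧ trFE s (u ^ (2 ^ s + 1)) = 0 ∧ trFE s (ω ^ a * u) = 0}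

/-- `T₁ ⊆ ℤ/Mℤ`: classes `a` with `|S_a| = 2^s - 1`. -/
def T1 {F : Type*} [Field F] (s : ℕ) (ω : F) : Set (ZMod (Mof s)) :=
  {x | (Sa s ω (x.val : ℤ)).ncard = 2 ^ s - 1}

/-- `T₂ ⊆ ℤ/Mℤ`: classes `a` with `|S_a| = 2(2^s - 1)`. -/
def T2 {F : Type*} [Field F] (s : ℕ) (ω : F) : Set (ZMod (Mof s)) :=
  {x | (Sa s ω (x.val : ℤ)).ncard = 2 * (2 ^ s - 1)}

/-- `T₃ ⊆ ℤ/Mℤ`: classes `a` with `|S_a| = 0`. -/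
def T3 {F : Type*} [Field F] (s : ℕ) (ω : F) : Set (ZMod (Mof s)) :=
  {x | (Sa s ω (x.val : ℤ)).ncard = 0}

/-- The cyclotomic class `C_i^{(M,K)} = {g^{i+Mt} : t ∈ ℤ}`. -/
def cyc {K : Type*} [Field K] (M : ℕ) (g : K) (i : ℤ) : Set K :=
  {x | ∃ t : ℤ, x = g ^ (i + (M : ℤ) * t)}

/-- `⋃_{i ∈ T} C_i^{(M,K)}` for a set `T ⊆ ℤ/Mℤ` of indices. -/
def Rclass {K : Type*} [Field K] (s : ℕ) (g : K) (T : Set (ZMod (Mof s))) : Set K :=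
  ⋃ i ∈ T, cyc (Mof s) g ((i.val : ℤ))

/-- The family `R_0 = {0}`, `R_k = ⋃_{i ∈ T_k} C_i^{(M,K)}`, `k = 1, 2, 3`. -/
def Rfam {F K : Type*} [Field F] [Field K] (s : ℕ) (ω : F) (g : K) : Fin 4 → Set K :=
  ![{0}, Rclass s g (T1 s ω), Rclass s g (T2 s ω), Rclass s g (T3 s ω)]

/-- Indicator `[P] = 1` if `P` holds, `0` otherwise. -/
def Ind (P : Prop) : ℤ := @ite ℤ P (Classical.propDecidable P) 1 0

/-!
The roots of `X² - wX + b` (`b ∈ F^×`, `w ∈ F`) are either elements `t, b / t` of `F^×` with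
`t + b / t = w`, or conjugate elements of `G` of norm `b` and trace `w`. So at most two elements
satisfy one or the other condition, counted with repetition, and the totals over `w`, namely `q - 1`
and `q + 1` with `q = |F|`, force equality. Hence an additive character composed with the trace sums
over the norm fibre of `b` to minus the Kloosterman sum at `b`.

The class `C_a` consists of the `x` whose norm lies in `ω ^ a E^×`, so its Gauss period is minus the
sum over `e ∈ E^×` of the Kloosterman sums at `ω ^ a e`. After substituting `t = ω ^ a u`,
orthogonality on `E` leaves only the `u` with `Tr u⁻¹ = 0`, that is `u ∈ D`. Finally `D` is stable
under `E^×`, so averaging `ψ(ω ^ a D)` over `E^×` expresses it through the number of `u ∈ D` with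
`Tr (ω ^ a u) = 0`; this number is `|S_a|`, because `Tr (u ^ (|E| + 1)) = N(u) Tr (u⁻¹)`.
-/

open Algebra (trace norm)

section CyclicGroup

theorem zpow_mem_iff_index_dvd {A : Type*} [CommGroup A] {g : A}
    (hg : ∀ x, x ∈ Subgroup.zpowers g) (H : Subgroup A) (m : ℤ) :
    g ^ m ∈ H ↔ (H.index : ℤ) ∣ m := by
  have hgen : ∀ x : A ⧸ H, x ∈ Subgroup.zpowers (g : A ⧸ H) := by
    rintro ⟨x⟩
    obtain ⟨n, rfl⟩ := hg x
    exact ⟨n, rfl⟩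
  rw [← QuotientGroup.eq_one_iff, QuotientGroup.mk_zpow, ← orderOf_dvd_iff_zpow_eq_one,
    orderOf_eq_card_of_forall_mem_zpowers hgen, Subgroup.index]

theorem coe_mem_cyc_index_iff {K : Type*} [Field K] {γ : Kˣ}
    (hγ : ∀ x, x ∈ Subgroup.zpowers γ) (H : Subgroup Kˣ) (a : ℤ) (x : Kˣ) :
    (x : K) ∈ cyc H.index (γ : K) a ↔ γ ^ (-a) * x ∈ H := by
  obtain ⟨n, rfl⟩ := hγ x
  dsimp only
  rw [← zpow_add, zpow_mem_iff_index_dvd hγ]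
  constructor
  · rintro ⟨t, ht⟩
    rw [← Units.val_zpow_eq_zpow_val, Units.val_inj] at ht
    rw [← zpow_mem_iff_index_dvd hγ, zpow_add, ht, ← zpow_add, zpow_mem_iff_index_dvd hγ]
    exact ⟨t, by ring⟩
  · rintro ⟨t, ht⟩
    exact ⟨t, by rw [← ht, ← Units.val_zpow_eq_zpow_val, add_neg_cancel_left]⟩

theorem zero_notMem_cyc {K : Type*} [Field K] (M : ℕ) (γ : Kˣ) (a : ℤ) :
    (0 : K) ∉ cyc M (γ : K) a := by
  rintro ⟨t, ht⟩
  exact zpow_ne_zero _ γ.ne_zero ht.symm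

theorem cyc_intCast_val (M : ℕ) [NeZero M] {K : Type*} [Field K] (g : K) (a : ℤ) :
    cyc M g ((a : ZMod M).val : ℤ) = cyc M g a := by
  have hmod : a % M + M * (a / M) = a := Int.emod_add_mul_ediv a M
  ext x
  rw [ZMod.val_intCast]
  constructor
  · rintro ⟨t, rfl⟩
    exact ⟨t - a / M, by congr 1; linear_combination hmod⟩
  · rintro ⟨t, rfl⟩
    exact ⟨t + a / M, by congr 1; linear_combination -hmod⟩

end CyclicGroup

section Units

variable {K : Type*} [Field K] [Fintype K] [DecidableEq K]

theorem sum_units_eq_sub_zero {A : Type*} [AddCommGroup A] (f : K → A) :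
    ∑ u : Kˣ, f u = ∑ x, f x - f 0 := by
  rw [eq_sub_iff_add_eq', Fintype.sum_eq_add_sum_subtype_ne f 0,
    Fintype.sum_equiv unitsEquivNeZero (fun u : Kˣ => f u) (fun x => f x) fun _ => rfl]

theorem eq_coe_map_units_of_zero_notMem {S : Set K} [DecidablePred (· ∈ S)] (hS : (0 : K) ∉ S) :
    S = (({u : Kˣ | (u : K) ∈ S} : Finset Kˣ).map ⟨Units.val, Units.val_injective⟩ : Finset K) := by
  ext x
  simp only [Finset.coe_map, Function.Embedding.coeFn_mk, Finset.coe_filter, Finset.mem_univ,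
    true_and, Set.mem_image, Set.mem_ofPred_eq]
  constructor
  · intro hx
    exact ⟨Units.mk0 x (ne_of_mem_of_not_mem hx hS), hx, rfl⟩
  · rintro ⟨u, hu, rfl⟩
    exact hu

theorem finsum_mem_eq_sum_units {A : Type*} [AddCommMonoid A] {S : Set K} [DecidablePred (· ∈ S)]
    (hS : (0 : K) ∉ S) (f : K → A) : ∑ᶠ x ∈ S, f x = ∑ u : Kˣ with u.val ∈ S, f u.val := by
  conv_lhs => rw [eq_coe_map_units_of_zero_notMem hS]
  rw [finsum_mem_coe_finset, Finset.sum_map]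
  rfl

theorem ncard_eq_card_units {S : Set K} [DecidablePred (· ∈ S)] (hS : (0 : K) ∉ S) :
    S.ncard = Finset.card {u : Kˣ | (u : K) ∈ S} := by
  conv_lhs => rw [eq_coe_map_units_of_zero_notMem hS]
  rw [Set.ncard_coe_finset, Finset.card_map]

end Units

section TraceLift

variable {E F R : Type*} [Field E] [Field F] [Algebra E F] [CommRing R]

/-- The additive character `ψ ∘ Tr_{F/E}` of `F` obtained from an additive character `ψ` of `E`. -/
def traceLift (F : Type*) [Field F] [Algebra E F] (ψ : AddChar E R) : AddChar F R :=
  ψ.compAddMonoidHom (trace E F : F →+ E)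

theorem traceLift_apply (ψ : AddChar E R) (x : F) : traceLift F ψ x = ψ (trace E F x) := rfl

theorem traceLift_ne_one [Finite F] {ψ : AddChar E R} (hψ : ψ ≠ 1) : traceLift F ψ ≠ 1 := by
  have : Finite E := Finite.of_injective _ (algebraMap E F).injective
  obtain ⟨y, hy⟩ := AddChar.ne_one_iff.1 hψ
  obtain ⟨x, rfl⟩ := Algebra.trace_surjective E F y
  exact AddChar.ne_one_iff.2 ⟨x, hy⟩

theorem traceLift_traceLift {G : Type*} [Field G] [Finite G] [Algebra F G] [Algebra E G]
    [IsScalarTower E F G] (ψ : AddChar E R) : traceLift G (traceLift F ψ) = traceLift G ψ := by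
  have : Finite F := Finite.of_injective _ (algebraMap F G).injective
  ext x
  simp only [traceLift_apply, Algebra.trace_trace]

end TraceLift

section QuadraticExtension

/-- The norm `G^× → F^×` on unit groups. -/
def unitsNorm (F G : Type*) [Field F] [Field G] [Algebra F G] : Gˣ →* Fˣ :=
  Units.map (norm F)

theorem unitsNorm_surjective (F G : Type*) [Field F] [Field G] [Finite G] [Algebra F G] :
    Function.Surjective (unitsNorm F G) :=
  FiniteField.unitsMap_norm_surjective F G

variable {F G : Type*} [Field F] [Field G] [Finite G] [Algebra F G]

theorem algebraMap_norm_eq_pow_card_add_one (hFG : Module.finrank F G = 2) (x : G) :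
    algebraMap F G (norm F x) = x ^ (Nat.card F + 1) := by
  rw [FiniteField.algebraMap_norm_eq_prod_pow, hFG]
  simp only [Finset.prod_range_succ, Finset.prod_range_zero, pow_zero, pow_one, one_mul]
  rw [pow_succ']

theorem sub_mul_sub_pow_card (hFG : Module.finrank F G = 2) (x y : G) :
    (y - x) * (y - x ^ Nat.card F) =
      y ^ 2 - algebraMap F G (trace F G x) * y + algebraMap F G (norm F x) := by
  rw [FiniteField.algebraMap_trace_eq_sum_pow, algebraMap_norm_eq_pow_card_add_one hFG, hFG]
  simp only [Finset.sum_range_succ, Finset.sum_range_zero, pow_zero, pow_one]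
  ring

theorem eq_or_eq_pow_card_of_norm_eq_of_trace_eq (hFG : Module.finrank F G = 2) {x y : G}
    (hnorm : norm F y = norm F x) (htrace : trace F G y = trace F G x) :
    y = x ∨ y = x ^ Nat.card F := by
  have hprod : (y - x) * (y - x ^ Nat.card F) = 0 := by
    rw [sub_mul_sub_pow_card hFG, ← hnorm, ← htrace, ← sub_mul_sub_pow_card hFG, sub_self, zero_mul]
  simpa only [mul_eq_zero, sub_eq_zero] using hprod

theorem algebraMap_eq_of_add_div_eq_trace (hFG : Module.finrank F G = 2) {x : G} {t : F}
    (ht : t ≠ 0) (h : t + norm F x / t = trace F G x) : algebraMap F G t = x := by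
  have hprod : (algebraMap F G t - x) * (algebraMap F G t - x ^ Nat.card F) = 0 := by
    rw [sub_mul_sub_pow_card hFG, ← h, ← map_pow, ← map_mul, ← map_sub, ← map_add,
      map_eq_zero]
    field_simp
    ring
  rcases mul_eq_zero.1 hprod with hx | hx
  · exact sub_eq_zero.1 hx
  · have : Finite F := Finite.of_injective _ (algebraMap F G).injective
    have := Fintype.ofFinite F
    rw [Nat.card_eq_fintype_card] at hx
    apply (FiniteField.frobeniusAlgHom F G).injective
    change algebraMap F G t ^ Fintype.card F = x ^ Fintype.card F
    rw [← map_pow, FiniteField.pow_card]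
    exact sub_eq_zero.1 hx

end QuadraticExtension

section Kloosterman

variable {F G R : Type*} [Field F] [DecidableEq F] [Field G] [Fintype G] [DecidableEq G]
  [Algebra F G] [CommRing R]

theorem card_norm_trace_fiber_le_two (hFG : Module.finrank F G = 2) (b : Fˣ) (w : F) :
    Finset.card {x : Gˣ | unitsNorm F G x = b ∧ trace F G x = w} ≤ 2 := by
  rcases Finset.eq_empty_or_nonempty {x : Gˣ | unitsNorm F G x = b ∧ trace F G x = w} with
    hempty | ⟨x, hx⟩
  · rw [hempty]
    exact Nat.zero_le 2
  · obtain ⟨rfl, rfl⟩ := (Finset.mem_filter_univ x).1 hx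
    refine (Finset.card_le_card fun y hy => ?_).trans
      (Finset.card_le_two (a := x) (b := x ^ Nat.card F))
    obtain ⟨hnorm, htrace⟩ := (Finset.mem_filter_univ y).1 hy
    simpa only [Finset.mem_insert, Finset.mem_singleton, Units.ext_iff, Units.val_pow_eq_pow_val]
      using eq_or_eq_pow_card_of_norm_eq_of_trace_eq hFG (congrArg Units.val hnorm) htrace

variable [Fintype F]

/-- The Kloosterman sum `∑_{t ≠ 0} ψ(t + b / t)` of an additive character of a finite field. -/
def kloostermanSum (ψ : AddChar F R) (b : Fˣ) : R :=
  ∑ t : Fˣ, ψ (t + (b / t : Fˣ))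

theorem card_add_div_fiber_le_two (b : Fˣ) (w : F) :
    Finset.card {t : Fˣ | (t + (b / t : Fˣ) : F) = w} ≤ 2 := by
  rcases Finset.eq_empty_or_nonempty {t : Fˣ | (t + (b / t : Fˣ) : F) = w} with
    hempty | ⟨t, ht⟩
  · rw [hempty]
    exact Nat.zero_le 2
  · obtain rfl := (Finset.mem_filter_univ t).1 ht
    refine (Finset.card_le_card fun y hy => ?_).trans (Finset.card_le_two (a := t) (b := b / t))
    have hsum := (Finset.mem_filter_univ y).1 hy
    have hprod : ((y : F) - t) * (y - b / t) = 0 := by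
      simp only [Units.val_div_eq_div_val] at hsum
      field_simp at hsum ⊢
      linear_combination hsum
    simpa only [Finset.mem_insert, Finset.mem_singleton, Units.ext_iff, Units.val_div_eq_div_val,
      mul_eq_zero, sub_eq_zero] using hprod

theorem card_norm_trace_fiber_add_card_add_div_fiber_le_two (hFG : Module.finrank F G = 2)
    (b : Fˣ) (w : F) :
    Finset.card {x : Gˣ | unitsNorm F G x = b ∧ trace F G x = w} +
      Finset.card {t : Fˣ | (t + (b / t : Fˣ) : F) = w} ≤ 2 := by
  set X : Finset Gˣ := {x | unitsNorm F G x = b ∧ trace F G x = w} with hX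
  set T : Finset Fˣ := {t | (t + (b / t : Fˣ) : F) = w} with hT
  have algebraMap_eq {x : Gˣ} (hx : x ∈ X) {t : Fˣ} (ht : t ∈ T) :
      algebraMap F G t = x := by
    obtain ⟨rfl, rfl⟩ := (Finset.mem_filter_univ x).1 hx
    apply algebraMap_eq_of_add_div_eq_trace hFG t.ne_zero
    rw [← (Finset.mem_filter_univ t).1 ht, Units.val_div_eq_div_val]
    rfl
  rcases X.eq_empty_or_nonempty with hX0 | ⟨x, hx⟩
  · rw [hX0, Finset.card_empty, zero_add]
    exact card_add_div_fiber_le_two b w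
  rcases T.eq_empty_or_nonempty with hT0 | ⟨t, ht⟩
  · rw [hT0, Finset.card_empty, add_zero]
    exact card_norm_trace_fiber_le_two hFG b w
  · refine add_le_add (Finset.card_le_one.2 fun y hy z hz => ?_)
      (Finset.card_le_one.2 fun y hy z hz => ?_)
    · exact Units.ext ((algebraMap_eq hy ht).symm.trans (algebraMap_eq hz ht))
    · exact Units.ext ((algebraMap F G).injective
        ((algebraMap_eq hx hy).trans (algebraMap_eq hx hz).symm))

theorem card_unitsNorm_fiber (hFG : Module.finrank F G = 2) (b : Fˣ) :
    Finset.card {x : Gˣ | unitsNorm F G x = b} = Fintype.card F + 1 := by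
  have hfiber (c : Fˣ) : Finset.card {x : Gˣ | unitsNorm F G x = c} =
      Finset.card {x : Gˣ | unitsNorm F G x = b} :=
    MonoidHom.card_fiber_eq_of_mem_range _ (unitsNorm_surjective F G c) (unitsNorm_surjective F G b)
  have hcard : Fintype.card Gˣ =
      Fintype.card Fˣ * Finset.card {x : Gˣ | unitsNorm F G x = b} := by
    rw [← Finset.card_univ, Finset.card_eq_sum_card_fiberwise (f := unitsNorm F G)
      (t := Finset.univ) fun _ _ => Finset.mem_univ _]
    simp only [hfiber, Finset.sum_const, Finset.card_univ, smul_eq_mul]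
  apply Nat.eq_of_mul_eq_mul_left (Fintype.card_pos (α := Fˣ))
  rw [← hcard, Fintype.card_units, Fintype.card_units, Module.card_eq_pow_finrank (K := F), hFG,
    mul_comm, ← Nat.sq_sub_sq, one_pow]

theorem card_norm_trace_fiber_add_card_add_div_fiber (hFG : Module.finrank F G = 2)
    (b : Fˣ) (w : F) :
    Finset.card {x : Gˣ | unitsNorm F G x = b ∧ trace F G x = w} +
      Finset.card {t : Fˣ | (t + (b / t : Fˣ) : F) = w} = 2 := by
  refine (Finset.sum_eq_sum_iff_of_le (s := Finset.univ) fun w _ =>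
    card_norm_trace_fiber_add_card_add_div_fiber_le_two hFG b w).1 ?_ w (Finset.mem_univ w)
  have hX : ∑ w, Finset.card {x : Gˣ | unitsNorm F G x = b ∧ trace F G x = w} =
      Fintype.card F + 1 := by
    rw [← card_unitsNorm_fiber hFG b, Finset.card_eq_sum_card_fiberwise
      (f := fun x : Gˣ => trace F G x) (t := Finset.univ) fun _ _ => Finset.mem_univ _]
    simp only [Finset.filter_filter]
  have hT : ∑ w, Finset.card {t : Fˣ | (t + (b / t : Fˣ) : F) = w} = Fintype.card F - 1 := by
    rw [← Fintype.card_units, ← Finset.card_univ, Finset.card_eq_sum_card_fiberwise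
      (f := fun t : Fˣ => (t + (b / t : Fˣ) : F)) (t := Finset.univ) fun _ _ => Finset.mem_univ _]
  have hpos : 0 < Fintype.card F := Fintype.card_pos
  rw [Finset.sum_add_distrib, hX, hT, Finset.sum_const, Finset.card_univ, smul_eq_mul]
  omega

theorem sum_traceLift_norm_fiber [IsDomain R] (hFG : Module.finrank F G = 2) {ψ : AddChar F R}
    (hψ : ψ ≠ 1) (b : Fˣ) :
    ∑ x : Gˣ with unitsNorm F G x = b, traceLift G ψ x.val = -kloostermanSum ψ b := by
  have hX : ∑ x : Gˣ with unitsNorm F G x = b, traceLift G ψ x.val =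
      ∑ w, Finset.card {x : Gˣ | unitsNorm F G x = b ∧ trace F G x = w} * ψ w := by
    simp only [traceLift_apply]
    rw [← Finset.sum_fiberwise' _ (fun x : Gˣ => trace F G x)]
    simp only [Finset.sum_const, nsmul_eq_mul, Finset.filter_filter]
  have hT : kloostermanSum ψ b =
      ∑ w, Finset.card {t : Fˣ | (t + (b / t : Fˣ) : F) = w} * ψ w := by
    rw [kloostermanSum, ← Finset.sum_fiberwise' _ (fun t : Fˣ => (t + (b / t : Fˣ) : F))]
    simp only [Finset.sum_const, nsmul_eq_mul]
  rw [eq_neg_iff_add_eq_zero, hX, hT, ← Finset.sum_add_distrib]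
  simp only [← add_mul, ← Nat.cast_add, card_norm_trace_fiber_add_card_add_div_fiber hFG,
    ← Finset.mul_sum, AddChar.sum_eq_zero_of_ne_one hψ, mul_zero]

end Kloosterman

section Tower

/-- The inclusion `E^× → F^×` of unit groups in a field extension `F/E`. -/
def unitsAlgebraMap (E F : Type*) [Field E] [Field F] [Algebra E F] : Eˣ →* Fˣ :=
  Units.map (algebraMap E F : E →* F)

/-- The elements of `G^×` whose norm to `F` lies in the smaller field `E`. -/
def normSubgroup (E F G : Type*) [Field E] [Field F] [Field G] [Algebra E F] [Algebra F G] :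
    Subgroup Gˣ :=
  (unitsAlgebraMap E F).range.comap (unitsNorm F G)

section

variable {E F : Type*} [Field E] [Field F] [Algebra E F]

theorem unitsAlgebraMap_injective : Function.Injective (unitsAlgebraMap E F) :=
  Units.map_injective (algebraMap E F).injective

theorem trace_unitsAlgebraMap_mul (e : Eˣ) (x : F) :
    trace E F (unitsAlgebraMap E F e * x) = e * trace E F x := by
  change trace E F (algebraMap E F e * x) = e * trace E F x
  rw [← Algebra.smul_def, map_smul, smul_eq_mul]

theorem trace_inv_unitsAlgebraMap_mul_eq_zero_iff (e : Eˣ) (u : Fˣ) :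
    trace E F ((unitsAlgebraMap E F e * u)⁻¹ : Fˣ) = 0 ↔ trace E F (u⁻¹ : Fˣ) = 0 := by
  rw [mul_inv, ← map_inv, Units.val_mul, trace_unitsAlgebraMap_mul, Units.mul_right_eq_zero]

theorem card_mul_card_units_trace_inv_eq_zero_add_one [DecidableEq E] [Fintype F]
    [DecidableEq F] :
    Nat.card E * (Finset.card {u : Fˣ | trace E F (u⁻¹ : Fˣ) = 0} + 1) = Nat.card F := by
  let T : F →+ E := trace E F
  have hker : Finset.card {u : Fˣ | trace E F (u⁻¹ : Fˣ) = 0} + 1 = Nat.card T.ker := by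
    have hinv : (Finset.card {u : Fˣ | trace E F (u⁻¹ : Fˣ) = 0} : ℤ) =
        ∑ u : Fˣ, if trace E F u = 0 then 1 else 0 := by
      rw [Finset.natCast_card_filter]
      exact Equiv.sum_comp (Equiv.inv Fˣ) fun u : Fˣ => if trace E F u = 0 then (1 : ℤ) else 0
    rw [Nat.card_eq_fintype_card, Fintype.card_subtype]
    apply Nat.cast_injective (R := ℤ)
    rw [Nat.cast_add, Nat.cast_one, hinv,
      sum_units_eq_sub_zero (fun x : F => if trace E F x = 0 then (1 : ℤ) else 0),
      Finset.natCast_card_filter, map_zero, if_pos rfl, sub_add_cancel]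
    exact Finset.sum_congr rfl fun x _ => if_congr Iff.rfl rfl rfl
  have hrange : Nat.card T.range = Nat.card E := by
    rw [AddMonoidHom.range_eq_top.2 (Algebra.trace_surjective E F), AddSubgroup.card_top]
  rw [hker, ← hrange, ← AddSubgroup.index_ker, mul_comm, AddSubgroup.card_mul_index]

end

theorem sum_units_addChar_mul {F R : Type*} [Field F] [Fintype F] [DecidableEq F] [CommRing R]
    [IsDomain R] {ψ : AddChar F R} (hψ : ψ ≠ 1) (c : Fˣ) : ∑ u : Fˣ, ψ (c * u : Fˣ) = -1 := by
  refine (Equiv.sum_comp (Equiv.mulLeft c) fun u : Fˣ => ψ u).trans ?_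
  rw [sum_units_eq_sub_zero (ψ ·),
    AddChar.sum_eq_zero_of_ne_one hψ, AddChar.map_zero_eq_one, zero_sub]

variable {E F R : Type*} [Field E] [Fintype E] [DecidableEq E] [Field F] [Algebra E F] [CommRing R]
  [IsDomain R]

theorem sum_units_traceLift_mul {ψ : AddChar E R} (hψ : ψ ≠ 1) (x : F) :
    ∑ e : Eˣ, traceLift F ψ (unitsAlgebraMap E F e * x) =
      (if trace E F x = 0 then (Fintype.card E : R) else 0) - 1 := by
  simp only [traceLift_apply, trace_unitsAlgebraMap_mul]
  rw [sum_units_eq_sub_zero (fun e : E => ψ (e * trace E F x)),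
    AddChar.sum_mulShift _ (AddChar.IsPrimitive.of_ne_one hψ), zero_mul, AddChar.map_zero_eq_one,
    Nat.cast_ite, Nat.cast_zero]

theorem card_sub_one_mul_sum_traceLift_mul {ψ : AddChar E R} (hψ : ψ ≠ 1) {S : Finset Fˣ}
    (hS : ∀ e u, unitsAlgebraMap E F e * u ∈ S ↔ u ∈ S) (c : Fˣ) :
    ((Fintype.card E : R) - 1) * ∑ u ∈ S, traceLift F ψ (c * u : Fˣ) =
      Fintype.card E * (S.filter fun u => trace E F (c * u : Fˣ) = 0).card - S.card := by
  have hshift (e : Eˣ) : ∑ u ∈ S, traceLift F ψ (c * u : Fˣ) =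
      ∑ u ∈ S, traceLift F ψ (unitsAlgebraMap E F e * (c * u : Fˣ)) := by
    refine (Finset.sum_equiv (Equiv.mulLeft (unitsAlgebraMap E F e)) (fun u => (hS e u).symm)
      fun u _ => ?_).symm
    rw [Equiv.coe_mulLeft, ← Units.val_mul, mul_left_comm]
  calc
    _ = ∑ e : Eˣ, ∑ u ∈ S, traceLift F ψ (unitsAlgebraMap E F e * (c * u : Fˣ)) := by
      simp only [← hshift, Finset.sum_const, Finset.card_univ, nsmul_eq_mul, Fintype.card_units,
        Nat.cast_sub (Fintype.card_pos (α := E)), Nat.cast_one]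
    _ = ∑ u ∈ S, ((if trace E F (c * u : Fˣ) = 0 then (Fintype.card E : R) else 0) - 1) := by
      rw [Finset.sum_comm]
      simp only [sum_units_traceLift_mul hψ]
    _ = _ := by
      rw [Finset.sum_sub_distrib, ← Finset.sum_filter, Finset.sum_const, Finset.sum_const,
        nsmul_eq_mul, nsmul_one, mul_comm]

variable [Fintype F] [DecidableEq F]

theorem sum_kloostermanSum_traceLift {ψ : AddChar E R} (hψ : ψ ≠ 1) (c : Fˣ) :
    ∑ e, kloostermanSum (traceLift F ψ) (c * unitsAlgebraMap E F e) =
      Fintype.card E * ∑ u : Fˣ with trace E F (u⁻¹ : Fˣ) = 0, traceLift F ψ (c * u : Fˣ) + 1 := by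
  have hsubst (e : Eˣ) : kloostermanSum (traceLift F ψ) (c * unitsAlgebraMap E F e) =
      ∑ u : Fˣ, traceLift F ψ (c * u : Fˣ) *
        traceLift F ψ (unitsAlgebraMap E F e * (u⁻¹ : Fˣ)) := by
    rw [kloostermanSum, ← Equiv.sum_comp (Equiv.mulLeft c)]
    refine Finset.sum_congr rfl fun u _ => ?_
    rw [Equiv.coe_mulLeft, mul_div_mul_left_eq_div, AddChar.map_add_eq_mul, div_eq_mul_inv,
      Units.val_mul (unitsAlgebraMap E F e)]
  calc
    _ = ∑ u : Fˣ, traceLift F ψ (c * u : Fˣ) *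
          ∑ e, traceLift F ψ (unitsAlgebraMap E F e * (u⁻¹ : Fˣ)) := by
      simp only [hsubst, Finset.mul_sum]
      exact Finset.sum_comm
    _ = ∑ u : Fˣ, ((if trace E F (u⁻¹ : Fˣ) = 0 then
          Fintype.card E * traceLift F ψ (c * u : Fˣ) else 0) - traceLift F ψ (c * u : Fˣ)) := by
      refine Finset.sum_congr rfl fun u _ => ?_
      rw [sum_units_traceLift_mul hψ, mul_sub, mul_one, mul_ite, mul_zero, mul_comm]
    _ = _ := by
      rw [Finset.sum_sub_distrib, sum_units_addChar_mul (traceLift_ne_one hψ), sub_neg_eq_add,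
        ← Finset.sum_filter, Finset.mul_sum]

theorem sum_traceLift_normSubgroup_coset {G : Type*} [Field G] [Fintype G] [DecidableEq G]
    [Algebra F G] [DecidablePred (· ∈ normSubgroup E F G)] (hFG : Module.finrank F G = 2)
    {ψ : AddChar E R} (hψ : ψ ≠ 1) (g : Gˣ) :
    ∑ x : Gˣ with g⁻¹ * x ∈ normSubgroup E F G, traceLift G (traceLift F ψ) x.val =
      -Fintype.card E *
        ∑ u : Fˣ with trace E F (u⁻¹ : Fˣ) = 0, traceLift F ψ (unitsNorm F G g * u : Fˣ) - 1 := by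
  have hcoset : ({x : Gˣ | g⁻¹ * x ∈ normSubgroup E F G} : Finset Gˣ) =
      Finset.univ.biUnion fun e : Eˣ =>
        {x : Gˣ | unitsNorm F G x = unitsNorm F G g * unitsAlgebraMap E F e} := by
    ext x
    simp only [normSubgroup, Subgroup.mem_comap, MonoidHom.mem_range, map_mul, map_inv,
      eq_inv_mul_iff_mul_eq, Finset.mem_filter_univ, Finset.mem_biUnion, Finset.mem_univ, true_and,
      eq_comm]
  rw [hcoset, Finset.sum_biUnion]
  · simp only [sum_traceLift_norm_fiber hFG (traceLift_ne_one hψ), Finset.sum_neg_distrib,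
      sum_kloostermanSum_traceLift hψ]
    ring
  · intro d _ e _ hde
    refine Finset.disjoint_filter.2 fun x _ hd he => hde ?_
    exact unitsAlgebraMap_injective (mul_left_cancel (hd.symm.trans he))

theorem card_units_mul_index_normSubgroup (E F G : Type*) [Field E] [Field F] [Field G] [Finite G]
    [Algebra E F] [Algebra F G] :
    Nat.card Eˣ * (normSubgroup E F G).index = Nat.card Fˣ := by
  rw [normSubgroup, Subgroup.index_comap_of_surjective _ (unitsNorm_surjective F G),
    Nat.card_congr (MonoidHom.ofInjective (unitsAlgebraMap_injective (E := E) (F := F))).toEquiv,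
    Subgroup.card_mul_index]

end Tower

section Existence

theorem exists_intermediateField_finrank_eq {K F : Type*} [Field K] [Field F] [Finite F]
    [Algebra K F] {d : ℕ} (hd : d ∣ Module.finrank K F) :
    ∃ E : IntermediateField K F, Module.finrank K E = d := by
  have : Finite K := Finite.of_injective _ (algebraMap K F).injective
  have : NeZero d := ⟨ne_zero_of_dvd_ne_zero Module.finrank_pos.ne' hd⟩
  obtain ⟨p, _⟩ := CharP.exists K
  have : Fact p.Prime := ⟨CharP.char_is_prime K p⟩
  have hrank := FiniteField.finrank_extension K p d
  obtain ⟨φ⟩ : Nonempty (FiniteField.Extension K p d →ₐ[K] F) :=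
    FiniteField.nonempty_algHom_of_finrank_dvd (hrank.symm ▸ hd)
  exact ⟨φ.fieldRange, (AlgEquiv.ofInjectiveField φ).toLinearEquiv.finrank_eq.symm.trans hrank⟩

theorem finrank_eq_of_card_eq_pow {K V : Type*} [Field K] [Finite K] [AddCommGroup V] [Module K V]
    [Finite V] {n : ℕ} (h : Nat.card V = Nat.card K ^ n) : Module.finrank K V = n :=
  Nat.pow_right_injective Finite.one_lt_card (Module.natCard_eq_pow_finrank.symm.trans h)

theorem exists_intermediateField_card_eq_pow {K F : Type*} [Field K] [Field F] [Finite F]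
    [Algebra K F] {m d : ℕ} (hd : d ≠ 0) (hF : Nat.card F = Nat.card K ^ (m * d)) :
    ∃ E : IntermediateField K F, Nat.card E = Nat.card K ^ d ∧ Module.finrank E F = m := by
  have : Finite K := Finite.of_injective _ (algebraMap K F).injective
  have hrank : Module.finrank K F = m * d := finrank_eq_of_card_eq_pow hF
  obtain ⟨E, hE⟩ := exists_intermediateField_finrank_eq (hrank ▸ dvd_mul_left d m)
  have hcard : Nat.card E = Nat.card K ^ d := by rw [Module.natCard_eq_pow_finrank (K := K), hE]
  refine ⟨E, hcard, Nat.eq_of_mul_eq_mul_left (Nat.pos_of_ne_zero hd) ?_⟩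
  rw [← hE, Module.finrank_mul_finrank, hrank, hE, mul_comm]

theorem exists_unit_generator {K : Type*} [Field K] [Finite K] (hK : 2 < Nat.card K) {γ : K}
    (hγ : ∀ x : K, x ≠ 0 → ∃ n : ℕ, x = γ ^ n) :
    ∃ g : Kˣ, (g : K) = γ ∧ ∀ x, x ∈ Subgroup.zpowers g := by
  have hne : γ ≠ 0 := by
    rintro rfl
    have : Nontrivial Kˣ :=
      Finite.one_lt_card_iff_nontrivial.1 (Nat.card_units K ▸ Nat.lt_sub_of_add_lt hK)
    obtain ⟨x, hx⟩ := exists_ne (1 : Kˣ)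
    obtain ⟨n, hn⟩ := hγ x x.ne_zero
    rcases eq_or_ne n 0 with rfl | hn0
    · exact hx (Units.ext (by rw [hn, pow_zero, Units.val_one]))
    · exact x.ne_zero (by rw [hn, zero_pow hn0])
  refine ⟨Units.mk0 γ hne, rfl, fun x => ?_⟩
  obtain ⟨n, hn⟩ := hγ x x.ne_zero
  refine ⟨n, (zpow_natCast _ n).trans (Units.ext ?_)⟩
  rw [hn, Units.val_pow_eq_pow_val, Units.val_mk0]

end Existence

section CubicExtension

variable {E F : Type*} [Field E] [Field F] [Algebra E F] {s : ℕ} (hE : Nat.card E = 2 ^ s)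
  (hEF : Module.finrank E F = 3)

section

variable [Finite F]

theorem trace_pow_card_pow (x : F) (k : ℕ) :
    trace E F (x ^ Nat.card E ^ k) = trace E F x := by
  have : Finite E := Finite.of_injective _ (algebraMap E F).injective
  have := Fintype.ofFinite E
  have hfrob := Algebra.trace_eq_of_algEquiv (FiniteField.frobeniusAlgEquivOfAlgebraic E F ^ k) x
  rwa [AlgEquiv.coe_pow, FiniteField.coe_frobeniusAlgEquivOfAlgebraic_iterate,
    ← Nat.card_eq_fintype_card] at hfrob

include hEF in
theorem trace_pow_card_add_one {u : F} (hu : u ≠ 0) :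
    trace E F (u ^ (Nat.card E + 1)) = norm E u * trace E F u⁻¹ := by
  rw [← smul_eq_mul, ← trace_pow_card_pow u⁻¹ 2, ← map_smul, Algebra.smul_def,
    FiniteField.algebraMap_norm_eq_prod_pow, hEF]
  simp only [Finset.prod_range_succ, Finset.prod_range_zero, pow_zero, pow_one, one_mul, inv_pow]
  rw [mul_inv_cancel_right₀ (pow_ne_zero _ hu), pow_succ']

include hE hEF

theorem trFE_eq_algebraMap_trace (x : F) : trFE s x = algebraMap E F (trace E F x) := by
  rw [FiniteField.algebraMap_trace_eq_sum_pow, hEF, hE, trFE]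
  simp only [Finset.sum_range_succ, Finset.sum_range_zero, pow_zero, pow_one, zero_add, pow_mul']

theorem trFE_eq_zero_iff (x : F) : trFE s x = 0 ↔ trace E F x = 0 := by
  rw [trFE_eq_algebraMap_trace hE hEF, map_eq_zero]

theorem trFE_pow_add_one_eq_zero_iff (u : Fˣ) :
    trFE s ((u : F) ^ (2 ^ s + 1)) = 0 ↔ trace E F (u⁻¹ : Fˣ) = 0 := by
  rw [trFE_eq_zero_iff hE hEF, ← hE, trace_pow_card_add_one hEF u.ne_zero, Units.val_inv_eq_inv_val,
    mul_eq_zero, or_iff_right (Algebra.norm_ne_zero_iff.2 u.ne_zero)]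

end

include hE hEF

theorem ncard_Sa [DecidableEq E] [Fintype F] [DecidableEq F] (ω : Fˣ) (a : ℤ) :
    (Sa s (ω : F) a).ncard = Finset.card
      {u : Fˣ | trace E F (u⁻¹ : Fˣ) = 0 ∧ trace E F (ω ^ a * u : Fˣ) = 0} := by
  classical
  rw [ncard_eq_card_units fun h => h.1 rfl]
  refine congrArg Finset.card (Finset.filter_congr fun u _ => ?_)
  rw [← trFE_pow_add_one_eq_zero_iff hE hEF, ← trFE_eq_zero_iff hE hEF, Units.val_mul,
    Units.val_zpow_eq_zpow_val]
  exact and_iff_right u.ne_zero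

theorem index_normSubgroup {G : Type*} [Field G] [Finite G] [Algebra F G] :
    (normSubgroup E F G).index = Mof s := by
  have : Finite F := Finite.of_injective _ (algebraMap F G).injective
  have : Finite E := Finite.of_injective _ (algebraMap E F).injective
  have hmul := card_units_mul_index_normSubgroup E F G
  have hgt : 1 < 2 ^ s := hE ▸ Finite.one_lt_card
  rw [Nat.card_units, Nat.card_units, Module.natCard_eq_pow_finrank (K := E) (V := F), hEF,
    hE] at hmul
  apply Nat.eq_of_mul_eq_mul_left (Nat.sub_pos_of_lt hgt)
  rw [hmul, Mof]
  zify [hgt.le, Nat.one_le_pow 3 (2 ^ s) (Nat.two_pow_pos s)]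
  ring

end CubicExtension

section BinaryField

/-- The nontrivial additive character of `𝔽₂` with values `±1`. -/
def signAddChar : AddChar (ZMod 2) ℤ :=
  AddChar.zmodChar 2 (ζ := -1) (by norm_num)

theorem signAddChar_apply (x : ZMod 2) : signAddChar x = if x = 0 then 1 else -1 := by
  fin_cases x <;> rfl

theorem signAddChar_ne_one : signAddChar ≠ 1 :=
  AddChar.ne_one_iff.2 ⟨1, by rw [signAddChar_apply]; decide⟩

theorem psi_eq_traceLift (F : Type*) [Field F] [Algebra (ZMod 2) F] :
    psi F = traceLift F signAddChar := by
  ext x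
  rw [traceLift_apply, signAddChar_apply, psi]

variable {E F : Type*} [Field E] [Algebra (ZMod 2) E] [Field F] [Algebra (ZMod 2) F] [Algebra E F]
  {s : ℕ} (hE : Nat.card E = 2 ^ s) (hEF : Module.finrank E F = 3)

include hE hEF

theorem psiSum_Dset [DecidableEq E] [Fintype F] [DecidableEq F] (c : Fˣ) :
    psiSum F c (Dset F s) = ∑ u : Fˣ with trace E F (u⁻¹ : Fˣ) = 0,
      traceLift F (traceLift E signAddChar) (c * u : Fˣ) := by
  classical
  rw [psiSum, finsum_mem_eq_sum_units fun h => h.1 rfl, traceLift_traceLift, psi_eq_traceLift]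
  refine Finset.sum_congr (Finset.filter_congr fun u _ => ?_) fun u _ => rfl
  rw [← trFE_eq_zero_iff hE hEF, Units.val_inv_eq_inv_val]
  exact and_iff_right u.ne_zero

theorem two_pow_sub_one_mul_psiSum_Dset [Finite F] (ω : Fˣ) (a : ℤ) :
    (2 ^ s - 1) * psiSum F ((ω : F) ^ a) (Dset F s) =
      2 ^ s * (Sa s (ω : F) a).ncard - (2 ^ (2 * s) - 1) := by
  have := Fintype.ofFinite F
  have := Classical.decEq E
  have := Classical.decEq F
  have : Finite E := Finite.of_injective _ (algebraMap E F).injective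
  have := Fintype.ofFinite E
  have hcard : Finset.card {u : Fˣ | trace E F (u⁻¹ : Fˣ) = 0} + 1 = 2 ^ (2 * s) := by
    apply Nat.eq_of_mul_eq_mul_left (Nat.two_pow_pos s)
    rw [← hE, card_mul_card_units_trace_inv_eq_zero_add_one, Module.natCard_eq_pow_finrank (K := E),
      hEF, hE]
    ring
  have hsum := card_sub_one_mul_sum_traceLift_mul (traceLift_ne_one (F := E) signAddChar_ne_one)
    (S := {u : Fˣ | trace E F (u⁻¹ : Fˣ) = 0})
    (fun e u => by
      rw [Finset.mem_filter_univ, Finset.mem_filter_univ,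
        trace_inv_unitsAlgebraMap_mul_eq_zero_iff])
    (ω ^ a)
  rw [← psiSum_Dset hE hEF, Finset.filter_filter, ← ncard_Sa hE hEF, ← Nat.card_eq_fintype_card, hE,
    Units.val_zpow_eq_zpow_val] at hsum
  push_cast at hsum
  zify at hcard
  linear_combination hsum - hcard

variable {G : Type*} [Field G] [Algebra (ZMod 2) G] [Finite G] [Algebra F G]
  (hFG : Module.finrank F G = 2) {γ : Gˣ} (hγ : ∀ x, x ∈ Subgroup.zpowers γ)

include hFG hγ

theorem gaussPeriod_eq_psiSum_Dset (a : ℤ) :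
    ∑ᶠ x ∈ cyc (Mof s) (γ : G) a, psi G x =
      -(2 ^ s) * psiSum F (norm F (γ : G) ^ a) (Dset F s) - 1 := by
  classical
  have : Finite F := Finite.of_injective _ (algebraMap F G).injective
  have : Finite E := Finite.of_injective _ (algebraMap E F).injective
  have := Fintype.ofFinite E
  have := Fintype.ofFinite F
  have := Fintype.ofFinite G
  have hperiod := sum_traceLift_normSubgroup_coset hFG
    (traceLift_ne_one (F := E) signAddChar_ne_one) (γ ^ a)
  rw [← psiSum_Dset hE hEF, ← Nat.card_eq_fintype_card, hE,
    traceLift_traceLift (F := E) (G := F), traceLift_traceLift, ← psi_eq_traceLift, map_zpow,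
    Units.val_zpow_eq_zpow_val] at hperiod
  rw [finsum_mem_eq_sum_units (zero_notMem_cyc _ _ _)]
  simp only [← index_normSubgroup hE hEF (G := G), coe_mem_cyc_index_iff hγ, zpow_neg]
  rw [hperiod, Nat.cast_pow, Nat.cast_ofNat]
  rfl

theorem gaussPeriod_eq_of_ncard_Sa {a : ℤ} {k : ℕ}
    (hk : (Sa s (norm F (γ : G)) a).ncard = k * (2 ^ s - 1)) :
    ∑ᶠ x ∈ cyc (Mof s) (γ : G) a, psi G x = 2 ^ (2 * s) * (1 - k) + 2 ^ s - 1 := by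
  have : Finite F := Finite.of_injective _ (algebraMap F G).injective
  have : Finite E := Finite.of_injective _ (algebraMap E F).injective
  have hgt : 1 < 2 ^ s := hE ▸ Finite.one_lt_card
  have hD : psiSum F (norm F (γ : G) ^ a) (Dset F s) = 2 ^ s * k - (2 ^ s + 1) := by
    have hmul : (2 ^ s - 1) * psiSum F (norm F (γ : G) ^ a) (Dset F s) =
        2 ^ s * (Sa s (norm F (γ : G)) a).ncard - (2 ^ (2 * s) - 1) :=
      two_pow_sub_one_mul_psiSum_Dset hE hEF (unitsNorm F G γ) a
    rw [hk, Nat.cast_mul, Nat.cast_sub hgt.le] at hmul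
    have hne : (2 ^ s - 1 : ℤ) ≠ 0 := sub_ne_zero.2 (mod_cast hgt.ne')
    apply mul_left_cancel₀ hne
    push_cast at hmul
    linear_combination hmul
  rw [gaussPeriod_eq_psiSum_Dset hE hEF hFG hγ, hD]
  ring

end BinaryField

theorem statement14 (s : ℕ) (hs : 1 ≤ s) (F G : Type*) [Field F] [Fintype F] [Algebra (ZMod 2) F]
    [Field G] [Fintype G] [Algebra (ZMod 2) G]
    (hF : Fintype.card F = 2 ^ (3 * s)) (hG : Fintype.card G = 2 ^ (6 * s))
    (f : F →+* G) (γ : G) (hγ : ∀ x : G, x ≠ 0 → ∃ n : ℕ, x = γ ^ n)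
    (ω : F) (hω : f ω = γ ^ (2 ^ (3 * s) + 1))
    (hωgen : ∀ x : F, x ≠ 0 → ∃ n : ℕ, x = ω ^ n) :
    ∀ a : ℤ,
      (∑ᶠ x ∈ cyc (Mof s) γ a, psi G x) = -(2 ^ s) * psiSum F (ω ^ a) (Dset F s) - 1 ∧
      ((a : ZMod (Mof s)) ∈ T1 s ω → (∑ᶠ x ∈ cyc (Mof s) γ a, psi G x) = 2 ^ s - 1) ∧
      ((a : ZMod (Mof s)) ∈ T2 s ω →
        (∑ᶠ x ∈ cyc (Mof s) γ a, psi G x) = -(2 ^ (2 * s)) + 2 ^ s - 1) ∧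
      ((a : ZMod (Mof s)) ∈ T3 s ω →
        (∑ᶠ x ∈ cyc (Mof s) γ a, psi G x) = 2 ^ (2 * s) + 2 ^ s - 1) := by
  rw [← Nat.card_eq_fintype_card] at hF hG
  let : Algebra F G := f.toAlgebra
  have hFG : Module.finrank F G = 2 := finrank_eq_of_card_eq_pow (by rw [hF, hG]; ring)
  obtain ⟨E, hE, hEF⟩ := exists_intermediateField_card_eq_pow (K := ZMod 2) (F := F)
    (m := 3) (Nat.one_le_iff_ne_zero.1 hs) (by rw [hF, Nat.card_zmod])
  rw [Nat.card_zmod] at hE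
  obtain rfl : norm F γ = ω := f.injective <| by
    rw [hω, ← hF]
    exact algebraMap_norm_eq_pow_card_add_one hFG γ
  have hcard : 2 < Nat.card G := by
    rw [hG]
    exact Nat.pow_lt_pow_right one_lt_two (by omega : 1 < 6 * s)
  obtain ⟨g, rfl, hg⟩ := exists_unit_generator hcard hγ
  intro a
  have hval (k : ℕ) (hk : (Sa s (norm F (g : G)) (a : ZMod (Mof s)).val).ncard = k * (2 ^ s - 1)) :
      ∑ᶠ x ∈ cyc (Mof s) (g : G) a, psi G x = 2 ^ (2 * s) * (1 - k) + 2 ^ s - 1 :=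
    cyc_intCast_val (Mof s) (g : G) a ▸ gaussPeriod_eq_of_ncard_Sa hE hEF hFG hg hk
  refine ⟨gaussPeriod_eq_psiSum_Dset hE hEF hFG hg a, fun h => ?_, fun h => ?_, fun h => ?_⟩
  · exact (hval 1 (h.trans (one_mul _).symm)).trans (by ring)
  · exact (hval 2 h).trans (by ring)
  · exact (hval 0 (h.trans (zero_mul _).symm)).trans (by ring)
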